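/- arXiv:math/0406451 — 2 statements merged into one kernel-verified Lean document; each statement's English description precedes it below -/
import Mathlib

section
/- Let k ≥ 1 and for each i ∈ {1,…,k} let (Y_i, μ_i) be a measurable space equipped with a σ-finite measure; let Y = ∏_{i=1}^k Y_i carry the product measure μ = ⊗_i μ_i. Let {f(·;θ) : θ ∈ Θ} be a family of probability density functions on Y with respect to μ which is complete. Let p : {0,1}^k × Y → [0,1] be a missing-data mechanism, i.e., for each r ∈ {0,1}^k the map y ↦ p(r,y) is measurable and ∑_{r ∈ {0,1}^k} p(r,y) = 1 for every y ∈ Y. For r ∈ {0,1}^k write O(r) = {i : r_i = 1}, write y^{(r)} for the restriction of y to the coordinates in O(r) and y^{(1−r)} for the restriction to the complementary coordinates, identify y with the pair (y^{(r)}, y^{(1−r)}), and let μ^{(r)} and μ^{(1−r)} be the corresponding product measures. Then the following are equivalent: (i) [MAR, up to null sets] for every r ∈ {0,1}^k there is a measurable function h_r on ∏_{i ∈ O(r)} Y_i such that for every θ ∈ Θ, p(r,y)·f(y;θ) = h_r(y^{(r)})·f(y;θ) for μ-almost every y ∈ Y; (ii) [likelihood ignorability] for every r ∈ {0,1}^k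 there is a measurable function w_r on ∏_{i ∈ O(r)} Y_i such that for every θ ∈ Θ, for μ^{(r)}-almost every y^{(r)}, ∫ f((y^{(r)},u);θ)·p(r,(y^{(r)},u)) dμ^{(1−r)}(u) = w_r(y^{(r)}) · ∫ f((y^{(r)},u);θ) dμ^{(1−r)}(u). -/
open MeasureTheory

/-!
Disintegrate the complete data over the observed coordinates. Integrating the missing coordinates
out of `p * f = w * f`, where `w` depends only on what is observed, turns MAR into LIG. Conversely,
LIG bounds the fibre integrals of `|w| * f` by those of `|p| * f`, so `w * f` is integrable; by
Fubini `p - w` then integrates to zero against every member of the family, and completeness gives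
`p * f = w * f` almost everywhere. The same function of the observed coordinates thus witnesses both
properties.
-/

section Product

variable {α β : Type*} [MeasurableSpace α] [MeasurableSpace β] {μ : Measure α} {ν : Measure β}
  [SFinite ν]

lemma ae_integral_eq_mul_integral_of_ae_eq_fst_mul {𝕜 : Type*} [RCLike 𝕜] {F f : α × β → 𝕜}
    {w : α → 𝕜} (hF : ∀ᵐ z ∂μ.prod ν, F z = w z.1 * f z) :
    ∀ᵐ x ∂μ, ∫ u, F (x, u) ∂ν = w x * ∫ u, f (x, u) ∂ν := by
  filter_upwards [Measure.ae_ae_of_ae_prod hF] with x hx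
  rw [integral_congr_ae hx, integral_const_mul]

lemma integral_eq_integral_fst_mul_of_ae_integral_eq [SFinite μ] {𝕜 : Type*} [RCLike 𝕜]
    {F f : α × β → 𝕜} {w : α → 𝕜} (hF : Integrable F (μ.prod ν))
    (hwf : Integrable (fun z => w z.1 * f z) (μ.prod ν))
    (h : ∀ᵐ x ∂μ, ∫ u, F (x, u) ∂ν = w x * ∫ u, f (x, u) ∂ν) :
    ∫ z, F z ∂μ.prod ν = ∫ z, w z.1 * f z ∂μ.prod ν := by
  rw [integral_prod _ hF, integral_prod _ hwf]
  refine integral_congr_ae ?_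
  filter_upwards [h] with x hx
  rw [hx, integral_const_mul]

lemma integrable_fst_mul_of_ae_integral_eq [SFinite μ] {F f : α × β → ℝ} {w : α → ℝ}
    (hw : AEStronglyMeasurable w μ) (hf_nonneg : ∀ z, 0 ≤ f z)
    (hf : Integrable f (μ.prod ν)) (hF : Integrable F (μ.prod ν))
    (h : ∀ᵐ x ∂μ, ∫ u, F (x, u) ∂ν = w x * ∫ u, f (x, u) ∂ν) :
    Integrable (fun z => w z.1 * f z) (μ.prod ν) := by
  refine (integrable_prod_iff (hw.comp_fst.mul hf.aestronglyMeasurable)).2 ⟨?_, ?_⟩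
  · filter_upwards [hf.prod_right_ae] with x hx
    exact hx.const_mul (w x)
  · refine hF.integral_prod_left.norm.congr ?_
    filter_upwards [h] with x hx
    calc ‖∫ u, F (x, u) ∂ν‖ = ‖w x‖ * ∫ u, f (x, u) ∂ν := by
          rw [hx, norm_mul, Real.norm_of_nonneg (integral_nonneg fun u => hf_nonneg (x, u))]
      _ = ∫ u, ‖w x * f (x, u)‖ ∂ν := by
          simp only [norm_mul, Real.norm_of_nonneg (hf_nonneg _), integral_const_mul]

end Product

/-- Completeness of a family of real functions `f θ` (in applications, densities with respect to
`P`): only a function vanishing `f θ`-almost everywhere for all `θ` integrates to zero against every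
member. Neither nonnegativity nor normalization of the `f θ` is part of the notion. -/
def IsCompleteFamily {Ω Θ : Type*} [MeasurableSpace Ω] (P : Measure Ω) (f : Θ → Ω → ℝ) : Prop :=
  ∀ t : Ω → ℝ, Measurable t → (∀ θ, Integrable (fun y => t y * f θ y) P) →
    (∀ θ, ∫ y, t y * f θ y ∂P = 0) → ∀ θ, ∀ᵐ y ∂P, t y * f θ y = 0

namespace IsCompleteFamily

variable {Ω Θ : Type*} [MeasurableSpace Ω] {P : Measure Ω} {f : Θ → Ω → ℝ}

lemma ae_mul_eq_mul (hf : IsCompleteFamily P f) {s t : Ω → ℝ} (hs : Measurable s)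
    (ht : Measurable t) (hsf : ∀ θ, Integrable (fun y => s y * f θ y) P)
    (htf : ∀ θ, Integrable (fun y => t y * f θ y) P)
    (h : ∀ θ, ∫ y, s y * f θ y ∂P = ∫ y, t y * f θ y ∂P) (θ : Θ) :
    ∀ᵐ y ∂P, s y * f θ y = t y * f θ y := by
  have hsub := hf (fun y => s y - t y) (hs.sub ht)
  simp only [sub_mul, sub_eq_zero] at hsub
  refine hsub (fun θ => (hsf θ).sub (htf θ)) (fun θ => ?_) θ
  rw [integral_sub (hsf θ) (htf θ), h θ, sub_self]

lemma comp_symm {Ω' : Type*} [MeasurableSpace Ω'] {Q : Measure Ω'} (hf : IsCompleteFamily P f)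
    {e : Ω ≃ᵐ Ω'} (he : MeasurePreserving e P Q) :
    IsCompleteFamily Q fun θ z => f θ (e.symm z) := by
  intro t ht ht_int ht_zero θ
  have h_zero : ∀ᵐ y ∂P, t (e y) * f θ y = 0 := by
    refine hf (t ∘ e) (ht.comp e.measurable) (fun θ => ?_) (fun θ => ?_) θ
    · simpa only [Function.comp_def, e.symm_apply_apply] using
        (he.integrable_comp_emb e.measurableEmbedding).2 (ht_int θ)
    · simpa only [Function.comp_def, e.symm_apply_apply, ht_zero θ] using
        he.integral_comp e.measurableEmbedding fun z => t z * f θ (e.symm z)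
  simpa only [e.apply_symm_apply] using (he.symm e).quasiMeasurePreserving.ae h_zero

lemma ae_eq_fst_mul_iff_ae_integral_eq {α β : Type*} [MeasurableSpace α] [MeasurableSpace β]
    {μ : Measure α} {ν : Measure β} [SFinite μ] [SFinite ν] {f : Θ → α × β → ℝ}
    (hf : IsCompleteFamily (μ.prod ν) f) (hf_nonneg : ∀ θ z, 0 ≤ f θ z)
    (hf_int : ∀ θ, Integrable (f θ) (μ.prod ν)) {p : α × β → ℝ} (hp : Measurable p)
    (hpf : ∀ θ, Integrable (fun z => p z * f θ z) (μ.prod ν)) {w : α → ℝ} (hw : Measurable w) :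
    (∀ θ, ∀ᵐ z ∂μ.prod ν, p z * f θ z = w z.1 * f θ z) ↔
      ∀ θ, ∀ᵐ x ∂μ, ∫ u, p (x, u) * f θ (x, u) ∂ν = w x * ∫ u, f θ (x, u) ∂ν := by
  refine ⟨fun h θ => ae_integral_eq_mul_integral_of_ae_eq_fst_mul (h θ), fun h => ?_⟩
  have hwf : ∀ θ, Integrable (fun z => w z.1 * f θ z) (μ.prod ν) := fun θ =>
    integrable_fst_mul_of_ae_integral_eq hw.aestronglyMeasurable (hf_nonneg θ) (hf_int θ) (hpf θ)
      (h θ)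
  exact hf.ae_mul_eq_mul hp (hw.comp measurable_fst) hpf hwf fun θ =>
    integral_eq_integral_fst_mul_of_ae_integral_eq (hpf θ) (hwf θ) (h θ)

end IsCompleteFamily

/-- The equivalence `e` splits the complete data into an observed part in `α` and a missing part
in `β`. -/
theorem mar_iff_lig_general {Ω α β Θ : Type*} [MeasurableSpace Ω] [MeasurableSpace α]
    [MeasurableSpace β] {P : Measure Ω} {μ : Measure α} {ν : Measure β} [SFinite μ] [SFinite ν]
    {e : Ω ≃ᵐ α × β} (he : MeasurePreserving e P (μ.prod ν)) {f : Θ → Ω → ℝ}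
    (hf : IsCompleteFamily P f) (hf_nonneg : ∀ θ y, 0 ≤ f θ y) (hf_int : ∀ θ, Integrable (f θ) P)
    {p : Ω → ℝ} (hp : Measurable p) (hpf : ∀ θ, Integrable (fun y => p y * f θ y) P)
    {w : α → ℝ} (hw : Measurable w) :
    (∀ θ, ∀ᵐ y ∂P, p y * f θ y = w (e y).1 * f θ y) ↔
      ∀ θ, ∀ᵐ x ∂μ, ∫ u, f θ (e.symm (x, u)) * p (e.symm (x, u)) ∂ν =
        w x * ∫ u, f θ (e.symm (x, u)) ∂ν := by
  have he_symm : MeasurePreserving e.symm (μ.prod ν) P := he.symm e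
  have integrable_comp {g : Ω → ℝ} (hg : Integrable g P) :
      Integrable (fun z => g (e.symm z)) (μ.prod ν) :=
    (he_symm.integrable_comp_emb e.symm.measurableEmbedding).2 hg
  have h_prod := (hf.comp_symm he).ae_eq_fst_mul_iff_ae_integral_eq (fun θ z => hf_nonneg θ _)
    (fun θ => integrable_comp (hf_int θ)) (hp.comp e.symm.measurable)
    (fun θ => integrable_comp (hpf θ)) hw
  simpa only [← he_symm.map_eq, e.symm.measurableEmbedding.ae_map_iff, e.apply_symm_apply,
    Function.comp_apply, mul_comm (p _)] using h_prod

/-- **Theorem 3.1** (Lu–Copas): for a selection model with a complete response family,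
missing at random (MAR) is necessary and sufficient for likelihood ignorability (LIG). -/
theorem mar_iff_lig
    {k : ℕ} (hk : 1 ≤ k)
    {Y : Fin k → Type*} [∀ i, MeasurableSpace (Y i)]
    (μ : ∀ i, Measure (Y i)) [∀ i, SigmaFinite (μ i)]
    {Θ : Type*} (f : Θ → (∀ i, Y i) → ℝ)
    (hf_meas : ∀ θ, Measurable (f θ))
    (hf_nonneg : ∀ θ y, 0 ≤ f θ y)
    (hf_int : ∀ θ, ∫ y, f θ y ∂(Measure.pi μ) = 1)
    -- completeness of the family {f(·;θ) : θ ∈ Θ}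
    (hf_complete : ∀ t : (∀ i, Y i) → ℝ, Measurable t →
      (∀ θ, Integrable (fun y => t y * f θ y) (Measure.pi μ)) →
      (∀ θ, ∫ y, t y * f θ y ∂(Measure.pi μ) = 0) →
      ∀ θ, ∀ᵐ y ∂(Measure.pi μ), t y * f θ y = 0)
    -- the missing-data mechanism
    (p : (Fin k → Bool) → (∀ i, Y i) → ℝ)
    (hp_meas : ∀ r, Measurable (p r))
    (hp_nonneg : ∀ r y, 0 ≤ p r y) (hp_le_one : ∀ r y, p r y ≤ 1)
    (hp_sum : ∀ y, ∑ r : Fin k → Bool, p r y = 1) :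
    -- (i) MAR (up to null sets)  ↔  (ii) LIG
    (∀ r : Fin k → Bool,
        ∃ h : (∀ i : {i // r i = true}, Y i) → ℝ, Measurable h ∧
          ∀ θ, ∀ᵐ y ∂(Measure.pi μ),
            p r y * f θ y = h (fun i => y i) * f θ y)
      ↔
    (∀ r : Fin k → Bool,
        ∃ w : (∀ i : {i // r i = true}, Y i) → ℝ, Measurable w ∧
          ∀ θ, ∀ᵐ yo ∂(Measure.pi fun i : {i // r i = true} => μ i),
            (∫ u, f θ ((MeasurableEquiv.piEquivPiSubtypeProd Y (fun i => r i = true)).symm (yo, u))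
                  * p r ((MeasurableEquiv.piEquivPiSubtypeProd Y
                      (fun i => r i = true)).symm (yo, u))
                ∂(Measure.pi fun i : {i // ¬ r i = true} => μ i))
              = w yo *
                ∫ u, f θ ((MeasurableEquiv.piEquivPiSubtypeProd Y
                    (fun i => r i = true)).symm (yo, u))
                  ∂(Measure.pi fun i : {i // ¬ r i = true} => μ i)) := by
  have hf_integrable (θ) : Integrable (f θ) (Measure.pi μ) :=
    .of_integral_ne_zero (by rw [hf_int θ]; exact one_ne_zero)
  have hpf (r) (θ) : Integrable (fun y => p r y * f θ y) (Measure.pi μ) :=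
    (hf_integrable θ).bdd_mul (c := 1) (hp_meas r).aestronglyMeasurable <| ae_of_all _ fun y =>
      (Real.norm_of_nonneg (hp_nonneg r y)).trans_le (hp_le_one r y)
  exact forall_congr' fun r => exists_congr fun w => and_congr_right fun hw =>
    mar_iff_lig_general (measurePreserving_piEquivPiSubtypeProd μ fun i => r i = true)
      hf_complete hf_nonneg hf_integrable (hp_meas r) (hpf r) hw
end

section
/- For θ ∈ ℝ let f_θ(y₁,y₂) = (1/(π√3))·exp(−(2/3)·((y₁−θ)² − (y₁−θ)(y₂−θ/2) + (y₂−θ/2)²)) and let φ_θ(y₁) = (2π)^{−1/2}·exp(−(y₁−θ)²/2). Then for every bounded measurable function h : ℝ² → ℝ, all θ, θ' ∈ ℝ and every y₁ ∈ ℝ: (∫_ℝ h(y₁,y₂) f_θ(y₁,y₂) dy₂)·φ_{θ'}(y₁) = (∫_ℝ h(y₁,y₂) f_{θ'}(y₁,y₂) dy₂)·φ_θ(y₁). -/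
open MeasureTheory Real

/-- The bivariate normal density with mean `(θ, θ/2)` and covariance `[[1,1/2],[1/2,1]]`. -/
noncomputable def binormal (θ : ℝ) (y : ℝ × ℝ) : ℝ :=
  (1 / (π * Real.sqrt 3)) *
    Real.exp (-(2 / 3) * ((y.1 - θ) ^ 2 - (y.1 - θ) * (y.2 - θ / 2) + (y.2 - θ / 2) ^ 2))

/-- The `N(θ,1)` density. -/
noncomputable def normal1 (θ : ℝ) (y₁ : ℝ) : ℝ :=
  (2 * π) ^ (-(1 : ℝ) / 2) * Real.exp (-(y₁ - θ) ^ 2 / 2)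

section ConditionalLaw

open ProbabilityTheory

lemma normal1_eq_gaussianPDFReal (θ : ℝ) : normal1 θ = gaussianPDFReal θ 1 := by
  ext y
  rw [normal1, gaussianPDFReal, neg_div, rpow_neg (by positivity), ← sqrt_eq_rpow, NNReal.coe_one,
    mul_one, mul_one]

lemma normal1_pos (θ y₁ : ℝ) : 0 < normal1 θ y₁ := by
  rw [normal1_eq_gaussianPDFReal]
  exact gaussianPDFReal_pos θ 1 y₁ one_ne_zero

/-- The mean `(θ, θ / 2)` moves along the regression line `y₂ = y₁ / 2`, so `θ` drops out of the
conditional law `N(y₁ / 2, 3 / 4)` of `Y₂` given `Y₁ = y₁`. -/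
lemma binormal_eq_normal1_mul_gaussianPDFReal (θ y₁ y₂ : ℝ) :
    binormal θ (y₁, y₂) = normal1 θ y₁ * gaussianPDFReal (y₁ / 2) (3 / 4) y₂ := by
  have normalization : π * √3 = √(2 * π) * √(2 * π * (3 / 4)) := by
    rw [← sqrt_mul (by positivity), show 2 * π * (2 * π * (3 / 4)) = π ^ 2 * 3 by ring,
      sqrt_mul (sq_nonneg π), sqrt_sq pi_nonneg]
  have complete_square :
      -(2 / 3) * ((y₁ - θ) ^ 2 - (y₁ - θ) * (y₂ - θ / 2) + (y₂ - θ / 2) ^ 2) =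
        -(y₁ - θ) ^ 2 / 2 + -(y₂ - y₁ / 2) ^ 2 / (2 * (3 / 4)) := by
    ring
  rw [normal1_eq_gaussianPDFReal, binormal, normalization, complete_square, exp_add]
  simp only [gaussianPDFReal, NNReal.coe_one, mul_one, NNReal.coe_div, NNReal.coe_ofNat, one_div,
    mul_inv]
  ring

variable {E : Type*} [NormedAddCommGroup E] [NormedSpace ℝ E]

lemma integrable_gaussianReal_iff {μ : ℝ} {v : NNReal} (hv : v ≠ 0) {f : ℝ → E} :
    Integrable f (gaussianReal μ v) ↔ Integrable fun x ↦ gaussianPDFReal μ v x • f x := by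
  rw [gaussianReal_of_var_ne_zero μ hv, integrable_withDensity_iff_integrable_smul'
    (measurable_gaussianPDF μ v) (.of_forall fun _ ↦ gaussianPDF_lt_top)]
  simp only [toReal_gaussianPDF]

lemma integrable_binormal_smul_iff {θ y₁ : ℝ} {f : ℝ → E} :
    Integrable (fun y₂ ↦ binormal θ (y₁, y₂) • f y₂) ↔
      Integrable f (gaussianReal (y₁ / 2) (3 / 4)) := by
  simp only [binormal_eq_normal1_mul_gaussianPDFReal, mul_smul]
  rw [integrable_fun_smul_iff (normal1_pos θ y₁).ne', integrable_gaussianReal_iff (by norm_num)]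

lemma integrable_binormal_smul_of_bound {θ y₁ C : ℝ} {f : ℝ → E}
    (hf : AEStronglyMeasurable f (gaussianReal (y₁ / 2) (3 / 4))) (hC : ∀ y₂, ‖f y₂‖ ≤ C) :
    Integrable fun y₂ ↦ binormal θ (y₁, y₂) • f y₂ :=
  integrable_binormal_smul_iff.2 (.of_bound hf C (.of_forall hC))

lemma integral_binormal_smul (θ y₁ : ℝ) (f : ℝ → E) :
    ∫ y₂, binormal θ (y₁, y₂) • f y₂ =
      normal1 θ y₁ • ∫ y₂, f y₂ ∂gaussianReal (y₁ / 2) (3 / 4) := by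
  simp only [binormal_eq_normal1_mul_gaussianPDFReal, mul_smul]
  rw [integral_smul, integral_gaussianReal_eq_integral_smul (by norm_num)]

theorem binormal_conditional_free_of_theta_general {h : ℝ × ℝ → E} {θ y₁ : ℝ}
    (h_int : Integrable fun y₂ ↦ binormal θ (y₁, y₂) • h (y₁, y₂)) (θ' : ℝ) :
    Integrable (fun y₂ ↦ binormal θ' (y₁, y₂) • h (y₁, y₂)) ∧
      normal1 θ' y₁ • ∫ y₂, binormal θ (y₁, y₂) • h (y₁, y₂) =
        normal1 θ y₁ • ∫ y₂, binormal θ' (y₁, y₂) • h (y₁, y₂) := by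
  refine ⟨integrable_binormal_smul_iff.2 (integrable_binormal_smul_iff.1 h_int), ?_⟩
  rw [integral_binormal_smul, integral_binormal_smul, smul_comm]

end ConditionalLaw

/-- **Example 3.1** (Lu–Copas): in the (incomplete) bivariate normal family the conditional
expectation of any bounded function of `(y₁, Y₂)` given `Y₁ = y₁` is the same for every `θ`;
hence any missing-data mechanism for `Y₂` is likelihood ignorable without being MAR. -/
theorem binormal_conditional_free_of_theta
    (h : ℝ × ℝ → ℝ) (hh_meas : Measurable h) (hh_bdd : ∃ C : ℝ, ∀ y, |h y| ≤ C) :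
    ∀ (θ θ' y₁ : ℝ),
      (∫ y₂ : ℝ, h (y₁, y₂) * binormal θ (y₁, y₂)) * normal1 θ' y₁
        = (∫ y₂ : ℝ, h (y₁, y₂) * binormal θ' (y₁, y₂)) * normal1 θ y₁ := by
  intro θ θ' y₁
  obtain ⟨C, hC⟩ := hh_bdd
  have h_int : Integrable fun y₂ ↦ binormal θ (y₁, y₂) • h (y₁, y₂) :=
    integrable_binormal_smul_of_bound
      (hh_meas.comp measurable_prodMk_left).aestronglyMeasurable fun y₂ ↦ hC (y₁, y₂)
  simpa only [smul_eq_mul, mul_comm] using (binormal_conditional_free_of_theta_general h_int θ').2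
end
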